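/- arXiv:1503.04350 — 7 statements merged into one kernel-verified Lean document; each statement's English description precedes it below -/
import Mathlib

section
/- Let μ, ν be real numbers with 0 < ν < μ. Then for every real x ≠ 0, the function x ↦ log(sinh(νx)/sinh(μx)) is twice differentiable at x and its second derivative there is strictly negative; equivalently, μ² sinh²(νx) < ν² sinh²(μx) for all x ≠ 0. -/
open Real

lemma aux_pos (μ ν : ℝ) (hν : 0 < ν) (hνμ : ν < μ) (x : ℝ) (hx : 0 < x) :
    μ * Real.sinh (ν * x) < ν * Real.sinh (μ * x) := by
  have hd : ∀ y : ℝ, HasDerivAt (fun y => ν * Real.sinh (μ * y) - μ * Real.sinh (ν * y))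
      (ν * (Real.cosh (μ * y) * (μ * 1)) - μ * (Real.cosh (ν * y) * (ν * 1))) y := fun y =>
    ((((hasDerivAt_id y).const_mul μ).sinh).const_mul ν).sub
      ((((hasDerivAt_id y).const_mul ν).sinh).const_mul μ)
  have hm : StrictMonoOn (fun y => ν * Real.sinh (μ * y) - μ * Real.sinh (ν * y))
      (Set.Ici 0) := by
    apply strictMonoOn_of_deriv_pos (convex_Ici 0)
    · exact fun y _ => (hd y).continuousAt.continuousWithinAt
    · intro y hy
      rw [interior_Ici] at hy
      have hy : 0 < y := hy
      rw [(hd y).deriv]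
      have h1 : Real.cosh (ν * y) < Real.cosh (μ * y) := by
        rw [Real.cosh_lt_cosh, abs_of_pos (by positivity),
          abs_of_pos (mul_pos (hν.trans hνμ) hy)]
        gcongr
      have h2 : 0 < ν * μ := mul_pos hν (hν.trans hνμ)
      nlinarith [mul_pos h2 (sub_pos.2 h1)]
  have := hm (Set.mem_Ici.2 le_rfl) (Set.mem_Ici.2 hx.le) hx
  simp at this
  exact this

lemma aux_sq (μ ν : ℝ) (hν : 0 < ν) (hνμ : ν < μ) (x : ℝ) (hx : x ≠ 0) :
    μ ^ 2 * Real.sinh (ν * x) ^ 2 < ν ^ 2 * Real.sinh (μ * x) ^ 2 := by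
  have key : ∀ x : ℝ, 0 < x →
      μ ^ 2 * Real.sinh (ν * x) ^ 2 < ν ^ 2 * Real.sinh (μ * x) ^ 2 := by
    intro x hx
    have h := aux_pos μ ν hν hνμ x hx
    have h0 : 0 < μ * Real.sinh (ν * x) :=
      mul_pos (hν.trans hνμ) (Real.sinh_pos_iff.2 (mul_pos hν hx))
    nlinarith
  rcases lt_or_gt_of_ne hx with h | h
  · simpa using key (-x) (by linarith)
  · exact key x h

/-- For `0 < ν < μ`, the function `x ↦ log (sinh (ν x) / sinh (μ x))` is twice
differentiable at every `x ≠ 0` with strictly negative second derivative there;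
equivalently, `μ² sinh²(νx) < ν² sinh²(μx)` for all `x ≠ 0`. -/
theorem log_sinh_ratio_strictly_concave (μ ν : ℝ) (hν : 0 < ν) (hνμ : ν < μ) :
    ∀ x : ℝ, x ≠ 0 →
      DifferentiableAt ℝ (fun x : ℝ => Real.log (Real.sinh (ν * x) / Real.sinh (μ * x))) x ∧
      DifferentiableAt ℝ
        (deriv (fun x : ℝ => Real.log (Real.sinh (ν * x) / Real.sinh (μ * x)))) x ∧
      deriv (deriv (fun x : ℝ => Real.log (Real.sinh (ν * x) / Real.sinh (μ * x)))) x < 0 ∧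
      μ ^ 2 * Real.sinh (ν * x) ^ 2 < ν ^ 2 * Real.sinh (μ * x) ^ 2 := by
  intro x hx
  have hμ : 0 < μ := hν.trans hνμ
  have hne : ∀ a : ℝ, 0 < a → ∀ y : ℝ, y ≠ 0 → Real.sinh (a * y) ≠ 0 := by
    intro a ha y hy h
    rw [Real.sinh_eq_zero] at h
    exact (mul_ne_zero ha.ne' hy) h
  have hs : ∀ a y : ℝ, HasDerivAt (fun y => Real.sinh (a * y)) (Real.cosh (a * y) * (a * 1)) y :=
    fun a y => ((hasDerivAt_id y).const_mul a).sinh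
  have hc : ∀ a y : ℝ, HasDerivAt (fun y => Real.cosh (a * y)) (Real.sinh (a * y) * (a * 1)) y :=
    fun a y => ((hasDerivAt_id y).const_mul a).cosh
  have h1 : ∀ y : ℝ, y ≠ 0 →
      HasDerivAt (fun x : ℝ => Real.log (Real.sinh (ν * x) / Real.sinh (μ * x)))
        (Real.cosh (ν * y) * (ν * 1) / Real.sinh (ν * y)
          - Real.cosh (μ * y) * (μ * 1) / Real.sinh (μ * y)) y := by
    intro y hy
    refine (((hs ν y).log (hne ν hν y hy)).sub ((hs μ y).log (hne μ hμ y hy))).congr_of_eventuallyEq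
      ?_
    filter_upwards [eventually_ne_nhds hy] with z hz
    exact Real.log_div (hne ν hν z hz) (hne μ hμ z hz)
  have h2 : HasDerivAt
      (deriv (fun x : ℝ => Real.log (Real.sinh (ν * x) / Real.sinh (μ * x))))
      (μ ^ 2 / Real.sinh (μ * x) ^ 2 - ν ^ 2 / Real.sinh (ν * x) ^ 2) x := by
    have hq : ∀ a : ℝ, 0 < a → HasDerivAt
        (fun y => Real.cosh (a * y) * (a * 1) / Real.sinh (a * y))
        (- (a ^ 2 / Real.sinh (a * x) ^ 2)) x := by
      intro a ha
      have h0 := hne a ha x hx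
      refine (((hc a x).mul_const (a * 1)).div (hs a x) h0).congr_deriv ?_
      rw [← neg_div]
      congr 1
      linear_combination (-a ^ 2) * Real.cosh_sq (a * x)
    refine (((hq ν hν).sub (hq μ hμ)).congr_of_eventuallyEq ?_).congr_deriv (by ring)
    filter_upwards [eventually_ne_nhds hx] with z hz
    exact (h1 z hz).deriv
  have h3 := aux_sq μ ν hν hνμ x hx
  refine ⟨(h1 x hx).differentiableAt, h2.differentiableAt, ?_, h3⟩
  have p : ∀ a : ℝ, 0 < a → 0 < Real.sinh (a * x) ^ 2 := fun a ha => by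
    have := hne a ha x hx
    positivity
  rw [h2.deriv, sub_neg, div_lt_div_iff₀ (p μ hμ) (p ν hν)]
  exact h3
end

section
/- Let μ, ν be real numbers with 0 < ν < μ and let Q : ℝ → ℝ be given by Q(x) = sinh(νx)/sinh(μx) for x ≠ 0 and Q(0) = ν/μ. Then Q(x) > 0 for all x, and for all real numbers x₁ < x₂ and y₁ < y₂ one has Q(x₁ − y₁)·Q(x₂ − y₂) − Q(x₁ − y₂)·Q(x₂ − y₁) ≥ 0; moreover the inequality is strict whenever the open intervals (x₁, x₂) and (y₁, y₂) intersect. (That is, Q belongs to the continuous class PF(2).) -/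
open Real

lemma aux_pos_s1 (p p' : ℝ → ℝ) (h0 : p 0 = 0) (hd : ∀ x, HasDerivAt p (p' x) x)
    (hp : ∀ x, 0 < x → 0 < p' x) (x : ℝ) (hx : 0 < x) : 0 < p x := by
  have hm : StrictMonoOn p (Set.Ici 0) := by
    apply strictMonoOn_of_deriv_pos (convex_Ici 0)
    · exact fun x _ => (hd x).continuousAt.continuousWithinAt
    · intro x hx
      rw [interior_Ici] at hx
      rw [(hd x).deriv]
      exact hp x hx
  have := hm (Set.mem_Ici.2 le_rfl) (Set.mem_Ici.2 hx.le) hx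
  rwa [h0] at this

lemma hd_sinh (c x : ℝ) : HasDerivAt (fun x => sinh (c * x)) (c * cosh (c * x)) x := by
  have := (hasDerivAt_const_mul (x := x) c).sinh
  rwa [mul_comm] at this

lemma hd_cosh (c x : ℝ) : HasDerivAt (fun x => cosh (c * x)) (c * sinh (c * x)) x := by
  have := (hasDerivAt_const_mul (x := x) c).cosh
  rwa [mul_comm] at this

lemma aux1 (μ ν : ℝ) (hν : 0 < ν) (hνμ : ν < μ) (x : ℝ) (hx : 0 < x) :
    0 < ν * sinh (μ * x) - μ * sinh (ν * x) := by
  refine aux_pos_s1 (fun x => ν * sinh (μ * x) - μ * sinh (ν * x)) _ (by simp)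
    (fun x => ((hd_sinh μ x).const_mul ν).sub ((hd_sinh ν x).const_mul μ)) ?_ x hx
  intro x hx
  have hμ : 0 < μ := hν.trans hνμ
  have : cosh (ν * x) < cosh (μ * x) := by
    rw [cosh_lt_cosh, abs_of_pos (by positivity), abs_of_pos (by positivity)]
    gcongr
  have : 0 < ν * μ * (cosh (μ * x) - cosh (ν * x)) := by
    have := sub_pos.2 this
    positivity
  linarith

lemma aux2 (μ ν : ℝ) (hν : 0 < ν) (hνμ : ν < μ) (x : ℝ) (hx : 0 < x) :
    0 < μ * (cosh (μ * x) * sinh (ν * x)) - ν * (cosh (ν * x) * sinh (μ * x)) := by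
  refine aux_pos_s1 (fun x => μ * (cosh (μ * x) * sinh (ν * x)) - ν * (cosh (ν * x) * sinh (μ * x)))
    _ (by simp)
    (fun x => (((hd_cosh μ x).mul (hd_sinh ν x)).const_mul μ).sub
      (((hd_cosh ν x).mul (hd_sinh μ x)).const_mul ν)) ?_ x hx
  intro x hx
  have hμ : 0 < μ := hν.trans hνμ
  have h1 : 0 < sinh (μ * x) := sinh_pos_iff.2 (by positivity)
  have h2 : 0 < sinh (ν * x) := sinh_pos_iff.2 (by positivity)
  have h3 : 0 < (μ ^ 2 - ν ^ 2) * (sinh (μ * x) * sinh (ν * x)) := by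
    have : 0 < μ ^ 2 - ν ^ 2 := by nlinarith
    positivity
  linarith

lemma hd_coth (c x : ℝ) (hx : sinh (c * x) ≠ 0) :
    HasDerivAt (fun x => c * cosh (c * x) / sinh (c * x)) (-(c / sinh (c * x)) ^ 2) x := by
  have := ((hd_cosh c x).const_mul c).div (hd_sinh c x) hx
  refine this.congr_deriv ?_
  have h := cosh_sq (c * x)
  field_simp
  rw [h]; ring

lemma Q_facts (μ ν : ℝ) (hν : 0 < ν) (hνμ : ν < μ)
    (Q : ℝ → ℝ)
    (hQ : ∀ x : ℝ, Q x = if x = 0 then ν / μ else Real.sinh (ν * x) / Real.sinh (μ * x)) :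
    (∀ x, 0 < Q x) ∧ (∀ x, Q (-x) = Q x) ∧
    StrictAntiOn (fun x => log (Q x)) (Set.Ici 0) ∧
    StrictConcaveOn ℝ (Set.Ici 0) (fun x => log (Q x)) := by
  have hμ : 0 < μ := hν.trans hνμ
  have heven : ∀ x, Q (-x) = Q x := by
    intro x
    simp [hQ, neg_div_neg_eq]
  have hs : ∀ c x : ℝ, 0 < c → 0 < x → 0 < sinh (c * x) :=
    fun c x hc hx => sinh_pos_iff.2 (by positivity)
  have hpos' : ∀ x, 0 < x → 0 < Q x := by
    intro x hx
    rw [hQ, if_neg hx.ne']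
    exact div_pos (hs _ _ hν hx) (hs _ _ hμ hx)
  have hpos : ∀ x, 0 < Q x := by
    intro x
    rcases lt_trichotomy x 0 with h | h | h
    · rw [← heven]; exact hpos' _ (by linarith)
    · rw [hQ, if_pos h]; positivity
    · exact hpos' x h
  have hlim : ∀ c : ℝ, Filter.Tendsto (fun x => x⁻¹ * sinh (c * x)) (nhdsWithin 0 {0}ᶜ) (nhds c) := by
    intro c
    have := (hd_sinh c 0).tendsto_slope_zero
    simpa using this
  have hc0 : ContinuousAt Q 0 := by
    rw [continuousAt_iff_punctured_nhds]
    have h := (hlim ν).div (hlim μ) hμ.ne'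
    have e : Q 0 = ν / μ := by simp [hQ]
    rw [e]
    refine h.congr' ?_
    filter_upwards [self_mem_nhdsWithin] with x hx
    have hx : x ≠ 0 := hx
    simp only [Pi.div_apply]
    rw [hQ, if_neg hx, mul_div_mul_left _ _ (inv_ne_zero hx)]
  have hder : ∀ x, 0 < x → HasDerivAt (fun x => log (Q x))
      (ν * cosh (ν * x) / sinh (ν * x) - μ * cosh (μ * x) / sinh (μ * x)) x := by
    intro x hx
    have h := ((hd_sinh ν x).log (hs _ _ hν hx).ne').sub ((hd_sinh μ x).log (hs _ _ hμ hx).ne')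
    refine h.congr_of_eventuallyEq ?_
    filter_upwards [lt_mem_nhds hx] with y hy
    rw [hQ, if_neg hy.ne', log_div (hs _ _ hν hy).ne' (hs _ _ hμ hy).ne']
    rfl
  have hcont : ContinuousOn (fun x => log (Q x)) (Set.Ici 0) := by
    intro x hx
    apply ContinuousAt.continuousWithinAt
    rcases eq_or_lt_of_le (Set.mem_Ici.1 hx) with h | h
    · subst h
      exact hc0.log (hpos 0).ne'
    · exact (hder x h).continuousAt
  refine ⟨hpos, heven, ?_, ?_⟩
  · apply strictAntiOn_of_deriv_neg (convex_Ici 0) hcont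
    intro x hx
    rw [interior_Ici] at hx
    have hx : 0 < x := hx
    rw [(hder x hx).deriv, sub_neg, div_lt_div_iff₀ (hs _ _ hν hx) (hs _ _ hμ hx)]
    linarith [aux2 μ ν hν hνμ x hx]
  · apply StrictAntiOn.strictConcaveOn_of_deriv (convex_Ici 0) hcont
    rw [interior_Ici]
    have hg : StrictAntiOn (fun x => ν * cosh (ν * x) / sinh (ν * x) - μ * cosh (μ * x) / sinh (μ * x))
        (Set.Ioi 0) := by
      have hd := fun (x : ℝ) (hx : 0 < x) =>
        (hd_coth ν x (hs _ _ hν hx).ne').sub (hd_coth μ x (hs _ _ hμ hx).ne')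
      apply strictAntiOn_of_deriv_neg (convex_Ioi 0)
      · exact fun x hx => (hd x hx).continuousAt.continuousWithinAt
      · intro x hx
        rw [interior_Ioi] at hx
        have hx : 0 < x := hx
        have h1 := hs _ _ hν hx
        have h2 := hs _ _ hμ hx
        have e := (hd x hx).deriv
        refine lt_of_eq_of_lt e ?_
        have : μ / sinh (μ * x) < ν / sinh (ν * x) := by
          rw [div_lt_div_iff₀ h2 h1]
          linarith [aux1 μ ν hν hνμ x hx]
        have : (μ / sinh (μ * x)) ^ 2 < (ν / sinh (ν * x)) ^ 2 := by
          gcongr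
        linarith
    intro x hx y hy hxy
    rw [(hder x hx).deriv, (hder y hy).deriv]
    exact hg hx hy hxy

lemma even_concave (f : ℝ → ℝ) (he : ∀ x, f (-x) = f x) (ha : StrictAntiOn f (Set.Ici 0))
    (hc : StrictConcaveOn ℝ (Set.Ici 0) f) : StrictConcaveOn ℝ Set.univ f := by
  have habs : ∀ x, f |x| = f x := by
    intro x
    rcases abs_choice x with h | h <;> rw [h]
    exact he x
  refine ⟨convex_univ, ?_⟩
  intro x _ y _ hxy a b hp hq hab
  have hle : |a • x + b • y| ≤ a • |x| + b • |y| := by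
    simp only [smul_eq_mul]
    refine (abs_add_le _ _).trans ?_
    rw [abs_mul, abs_mul, abs_of_pos hp, abs_of_pos hq]
  have hm0 : (0:ℝ) ≤ a • |x| + b • |y| := (abs_nonneg _).trans hle
  rw [← habs (a • x + b • y), ← habs x, ← habs y]
  by_cases h : |x| = |y|
  · have hxy' : x = -y := (abs_eq_abs.1 h).resolve_left hxy
    have hy : y ≠ 0 := by
      rintro rfl
      simp at hxy'
      exact hxy hxy'
    rw [h, ← add_smul, hab, one_smul]
    apply ha (Set.mem_Ici.2 (abs_nonneg _)) (Set.mem_Ici.2 (abs_nonneg _))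
    subst hxy'
    have : a • (-y) + b • y = (b - a) * y := by simp only [smul_eq_mul]; ring
    rw [this, abs_mul]
    have h1 : |b - a| < 1 := by rw [abs_lt]; constructor <;> linarith
    have h2 := abs_pos.2 hy
    nlinarith
  · exact lt_of_lt_of_le (hc.2 (Set.mem_Ici.2 (abs_nonneg x)) (Set.mem_Ici.2 (abs_nonneg y)) h hp hq hab)
      (ha.antitoneOn (Set.mem_Ici.2 (abs_nonneg _)) (Set.mem_Ici.2 hm0) hle)

lemma main_strict (Q : ℝ → ℝ) (hpos : ∀ x, 0 < Q x)
    (hc : StrictConcaveOn ℝ Set.univ (fun x => log (Q x))) (x₁ x₂ y₁ y₂ : ℝ)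
    (hx : x₁ < x₂) (hy : y₁ < y₂) :
    0 < Q (x₁ - y₁) * Q (x₂ - y₂) - Q (x₁ - y₂) * Q (x₂ - y₁) := by
  rw [sub_pos, ← log_lt_log_iff (mul_pos (hpos _) (hpos _)) (mul_pos (hpos _) (hpos _)),
    log_mul (hpos _).ne' (hpos _).ne', log_mul (hpos _).ne' (hpos _).ne']
  set p := x₂ - x₁ with hp
  set q := y₂ - y₁ with hq
  have hp0 : 0 < p := sub_pos.2 hx
  have hq0 : 0 < q := sub_pos.2 hy
  have hne : x₁ - y₂ ≠ x₂ - y₁ := by intro h; linarith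
  have hsum : p / (p + q) + q / (p + q) = 1 := by field_simp
  have h1 := hc.2 (Set.mem_univ (x₁ - y₂)) (Set.mem_univ (x₂ - y₁)) hne
    (show 0 < p / (p + q) by positivity) (show 0 < q / (p + q) by positivity) hsum
  have h2 := hc.2 (Set.mem_univ (x₁ - y₂)) (Set.mem_univ (x₂ - y₁)) hne
    (show 0 < q / (p + q) by positivity) (show 0 < p / (p + q) by positivity) (by linarith)
  have e1 : (p / (p + q)) • (x₁ - y₂) + (q / (p + q)) • (x₂ - y₁) = x₁ - y₁ := by
    simp only [smul_eq_mul]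
    field_simp
    rw [hp, hq]; ring
  have e2 : (q / (p + q)) • (x₁ - y₂) + (p / (p + q)) • (x₂ - y₁) = x₂ - y₂ := by
    simp only [smul_eq_mul]
    field_simp
    rw [hp, hq]; ring
  simp only [e1] at h1
  simp only [e2] at h2
  simp only [smul_eq_mul] at h1 h2
  have hs2 : q / (p + q) = 1 - p / (p + q) := by linarith
  rw [hs2] at h1 h2
  linarith

/-- For `0 < ν < μ`, the function `Q(x) = sinh(νx)/sinh(μx)` (with `Q(0) = ν/μ`)
is positive and belongs to the continuous class `PF(2)`: the `2×2` "minors"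
`Q(x₁−y₁)Q(x₂−y₂) − Q(x₁−y₂)Q(x₂−y₁)` are nonnegative for `x₁ < x₂`, `y₁ < y₂`,
and strictly positive whenever the intervals `(x₁,x₂)` and `(y₁,y₂)` intersect. -/
theorem sinh_ratio_PF2 (μ ν : ℝ) (hν : 0 < ν) (hνμ : ν < μ)
    (Q : ℝ → ℝ)
    (hQ : ∀ x : ℝ, Q x = if x = 0 then ν / μ else Real.sinh (ν * x) / Real.sinh (μ * x)) :
    (∀ x : ℝ, 0 < Q x) ∧
    (∀ x₁ x₂ y₁ y₂ : ℝ, x₁ < x₂ → y₁ < y₂ →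
      0 ≤ Q (x₁ - y₁) * Q (x₂ - y₂) - Q (x₁ - y₂) * Q (x₂ - y₁)) ∧
    (∀ x₁ x₂ y₁ y₂ : ℝ, x₁ < x₂ → y₁ < y₂ →
      (Set.Ioo x₁ x₂ ∩ Set.Ioo y₁ y₂).Nonempty →
      0 < Q (x₁ - y₁) * Q (x₂ - y₂) - Q (x₁ - y₂) * Q (x₂ - y₁)) := by
  obtain ⟨hpos, he, ha, hc⟩ := Q_facts μ ν hν hνμ Q hQ
  have hc' := even_concave (fun x => log (Q x)) (fun x => by simp only [he]) ha hc
  exact ⟨hpos, fun x₁ x₂ y₁ y₂ hx hy => (main_strict Q hpos hc' x₁ x₂ y₁ y₂ hx hy).le,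
    fun x₁ x₂ y₁ y₂ hx hy _ => main_strict Q hpos hc' x₁ x₂ y₁ y₂ hx hy⟩
end

section
/- Let K(k) = ∫₀^{π/2} (1 − k² sin²θ)^{−1/2} dθ for k ∈ (0,1) and set k' = √(1 − k²). Then the function k ↦ K(k')/K(k) is strictly decreasing on the interval (0,1): if 0 < k₁ < k₂ < 1 then K(√(1−k₂²))/K(k₂) < K(√(1−k₁²))/K(k₁). -/
open Real

lemma aux_base (k : ℝ) (h0 : 0 < k) (h1 : k < 1) (θ : ℝ) : 0 < 1 - k ^ 2 * Real.sin θ ^ 2 := by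
  have h2 := Real.sin_sq_le_one θ
  have h3 : k ^ 2 < 1 := by nlinarith
  nlinarith [sq_nonneg k, sq_nonneg (Real.sin θ)]

lemma aux_cont (k : ℝ) (h0 : 0 < k) (h1 : k < 1) :
    Continuous fun θ : ℝ => (1 - k ^ 2 * Real.sin θ ^ 2) ^ (-(1:ℝ)/2) := by
  apply Continuous.rpow_const
  · fun_prop
  · intro θ
    exact Or.inl (aux_base k h0 h1 θ).ne'

lemma aux_pos_s3 (k : ℝ) (h0 : 0 < k) (h1 : k < 1) :
    0 < ∫ θ in (0:ℝ)..(π/2), (1 - k ^ 2 * Real.sin θ ^ 2) ^ (-(1:ℝ)/2) := by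
  apply intervalIntegral.intervalIntegral_pos_of_pos
  · exact (aux_cont k h0 h1).intervalIntegrable _ _
  · intro θ
    exact Real.rpow_pos_of_pos (aux_base k h0 h1 θ) _
  · positivity

lemma aux_lt (a b : ℝ) (h0 : 0 < a) (hab : a < b) (h1 : b < 1) :
    (∫ θ in (0:ℝ)..(π/2), (1 - a ^ 2 * Real.sin θ ^ 2) ^ (-(1:ℝ)/2)) <
      ∫ θ in (0:ℝ)..(π/2), (1 - b ^ 2 * Real.sin θ ^ 2) ^ (-(1:ℝ)/2) := by
  have hsq : a ^ 2 < b ^ 2 := by nlinarith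
  apply intervalIntegral.integral_lt_integral_of_continuousOn_of_le_of_exists_lt
  · positivity
  · exact (aux_cont a h0 (hab.trans h1)).continuousOn
  · exact (aux_cont b (h0.trans hab) h1).continuousOn
  · intro θ _
    apply Real.rpow_le_rpow_of_nonpos (aux_base b (h0.trans hab) h1 θ)
    · nlinarith [sq_nonneg (Real.sin θ)]
    · norm_num
  · refine ⟨π/2, ⟨by positivity, le_refl _⟩, ?_⟩
    apply Real.rpow_lt_rpow_of_neg (aux_base b (h0.trans hab) h1 _)
    · rw [Real.sin_pi_div_two]; linarith
    · norm_num

/-- The ratio `K(k')/K(k)` of complete elliptic integrals of the first kind,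
with `k' = √(1 - k²)`, is strictly decreasing on `(0,1)`. -/
theorem ellipticK_ratio_strictAnti
    (K : ℝ → ℝ)
    (hK : ∀ k : ℝ, K k = ∫ θ in (0:ℝ)..(π/2), (1 - k ^ 2 * Real.sin θ ^ 2) ^ (-(1:ℝ)/2)) :
    ∀ k₁ k₂ : ℝ, 0 < k₁ → k₁ < k₂ → k₂ < 1 →
      K (Real.sqrt (1 - k₂ ^ 2)) / K k₂ < K (Real.sqrt (1 - k₁ ^ 2)) / K k₁ := by
  intro a b h0 hab h1
  have hpos : ∀ k, 0 < k → k < 1 → 0 < K k := fun k h h' => by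
    rw [hK]; exact aux_pos_s3 k h h'
  have hlt : ∀ x y, 0 < x → x < y → y < 1 → K x < K y := fun x y h h' h'' => by
    rw [hK, hK]; exact aux_lt x y h h' h''
  have hb : 0 < Real.sqrt (1 - b ^ 2) := Real.sqrt_pos.2 (by nlinarith)
  have hba : Real.sqrt (1 - b ^ 2) < Real.sqrt (1 - a ^ 2) :=
    Real.sqrt_lt_sqrt (by nlinarith) (by nlinarith)
  have ha : Real.sqrt (1 - a ^ 2) < 1 := by
    rw [Real.sqrt_lt' one_pos]; nlinarith
  exact div_lt_div₀ (hlt _ _ hb hba ha) (hlt a b h0 hab h1).le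
    (hpos _ (hb.trans hba) ha).le (hpos a h0 (hab.trans h1))
end

section
/- Fix L > 0 and δ > 0. For k ∈ (0,1) set t(k) = K(√(1−k²))/K(k), where K(k) = ∫₀^{π/2} (1 − k² sin²θ)^{−1/2} dθ, and suppose k satisfies the constraint (2δ/L)·(1/t(k)) < 1, i.e. 2δ/L < t(k). For such k define N(k) = (8π²/L)·Σ_{m=1}^∞ sinh²(2 m π δ/L) / sinh²(m π t(k)). Then the series defining N(k) converges, and N is strictly increasing: if 0 < k₁ < k₂ < 1 both satisfy 2δ/L < t(kᵢ), then N(k₁) < N(k₂). -/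
open Real

lemma base_pos (k θ : ℝ) (h0 : 0 ≤ k) (h1 : k < 1) : 0 < 1 - k ^ 2 * Real.sin θ ^ 2 := by
  have h2 : Real.sin θ ^ 2 ≤ 1 := Real.sin_sq_le_one θ
  have h3 : k ^ 2 < 1 := by nlinarith
  nlinarith [sq_nonneg (Real.sin θ), sq_nonneg k]

lemma integrand_cont (k : ℝ) (h0 : 0 ≤ k) (h1 : k < 1) :
    Continuous (fun θ : ℝ => (1 - k ^ 2 * Real.sin θ ^ 2) ^ (-(1:ℝ)/2)) := by
  refine Continuous.rpow_const (by fun_prop) ?_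
  intro θ
  exact Or.inl (base_pos k θ h0 h1).ne'

lemma K_pos (k : ℝ) (h0 : 0 ≤ k) (h1 : k < 1) :
    0 < ∫ θ in (0:ℝ)..(π/2), (1 - k ^ 2 * Real.sin θ ^ 2) ^ (-(1:ℝ)/2) := by
  refine intervalIntegral.intervalIntegral_pos_of_pos
    ((integrand_cont k h0 h1).intervalIntegrable _ _) ?_ (by positivity)
  intro θ
  exact Real.rpow_pos_of_pos (base_pos k θ h0 h1) _

lemma K_lt (a b : ℝ) (h0 : 0 ≤ a) (hab : a < b) (h1 : b < 1) :
    (∫ θ in (0:ℝ)..(π/2), (1 - a ^ 2 * Real.sin θ ^ 2) ^ (-(1:ℝ)/2)) <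
    ∫ θ in (0:ℝ)..(π/2), (1 - b ^ 2 * Real.sin θ ^ 2) ^ (-(1:ℝ)/2) := by
  have hsq : a ^ 2 < b ^ 2 := by nlinarith
  refine intervalIntegral.integral_lt_integral_of_continuousOn_of_le_of_exists_lt
    (by positivity) (integrand_cont a h0 (hab.trans h1)).continuousOn
    (integrand_cont b (h0.trans hab.le) h1).continuousOn ?_ ⟨π/2, ⟨by positivity, le_rfl⟩, ?_⟩
  · intro θ _
    refine Real.rpow_le_rpow_of_nonpos (base_pos b θ (h0.trans hab.le) h1) ?_ (by norm_num)
    nlinarith [sq_nonneg (Real.sin θ)]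
  · refine Real.rpow_lt_rpow_of_neg (base_pos b _ (h0.trans hab.le) h1) ?_ (by norm_num)
    rw [Real.sin_pi_div_two]
    linarith

lemma sinh_le_aux (x y : ℝ) (h : x ≤ y) : Real.sinh x ≤ Real.exp (x - y) * Real.sinh y := by
  rw [Real.sinh_eq, Real.sinh_eq]
  have e1 : Real.exp (x - y) * Real.exp y = Real.exp x := by
    rw [← Real.exp_add]; congr 1; ring
  have e2 : Real.exp (x - y) * Real.exp (-y) = Real.exp (x - 2 * y) := by
    rw [← Real.exp_add]; congr 1; ring
  have e3 : Real.exp (x - 2 * y) ≤ Real.exp (-x) := Real.exp_le_exp.mpr (by linarith)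
  have : Real.exp (x - y) * ((Real.exp y - Real.exp (-y)) / 2)
      = (Real.exp x - Real.exp (x - 2 * y)) / 2 := by
    rw [← e1, ← e2]; ring
  rw [this]; linarith

lemma summ_aux (L δ s : ℝ) (hL : 0 < L) (hδ : 0 < δ) (hs : 2 * δ / L < s) :
    Summable (fun m : ℕ => Real.sinh (2 * (m + 1) * π * δ / L) ^ 2
        / Real.sinh ((m + 1) * π * s) ^ 2) := by
  have hp : 0 < 2 * δ / L := by positivity
  have hs0 : 0 < s := hp.trans hs
  have hneg : π * (2 * δ / L - s) < 0 := mul_neg_of_pos_of_neg Real.pi_pos (by linarith)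
  have hr : Real.exp (π * (2 * δ / L - s)) ^ 2 < 1 := by
    have := Real.exp_lt_one_iff.mpr hneg
    have := Real.exp_pos (π * (2 * δ / L - s))
    nlinarith
  have hg := (summable_geometric_of_lt_one (sq_nonneg _) hr).comp_injective
    (add_left_injective 1)
  refine Summable.of_nonneg_of_le (fun m => by positivity) (fun m => ?_) hg
  have hm : (0:ℝ) < (m:ℝ) + 1 := by positivity
  have hy : 0 < (m + 1) * π * s := by positivity
  have hx : 0 < 2 * (m + 1) * π * δ / L := by positivity
  have hdiff : 2 * (m + 1) * π * δ / L - (m + 1) * π * s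
      = ((m + 1 : ℕ) : ℝ) * (π * (2 * δ / L - s)) := by
    push_cast; ring
  have hle : 2 * (m + 1) * π * δ / L ≤ (m + 1) * π * s := by
    have : ((m + 1 : ℕ) : ℝ) * (π * (2 * δ / L - s)) < 0 :=
      mul_neg_of_pos_of_neg (by push_cast; exact hm) hneg
    linarith
  have key := sinh_le_aux _ _ hle
  rw [hdiff, Real.exp_nat_mul] at key
  have hsx := Real.sinh_pos_iff.mpr hx
  have hsy := Real.sinh_pos_iff.mpr hy
  rw [div_le_iff₀ (by positivity)]
  have k2 := pow_le_pow_left₀ hsx.le key 2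
  calc _ ≤ _ := k2
    _ = _ := by simp only [Function.comp]; ring

/-- For fixed `L, δ > 0` and `t(k) = K(√(1-k²))/K(k)`, on the set of moduli `k ∈ (0,1)`
satisfying the analytic condition `2δ/L < t(k)`, the series
`N(k) = (8π²/L) Σ_{m≥1} sinh²(2mπδ/L)/sinh²(mπ t(k))` converges and `N` is strictly
increasing in `k`. -/
theorem ILW_norm_series_summable_strictMono
    (L δ : ℝ) (hL : 0 < L) (hδ : 0 < δ)
    (K : ℝ → ℝ)
    (hK : ∀ k : ℝ, K k = ∫ θ in (0:ℝ)..(π/2), (1 - k ^ 2 * Real.sin θ ^ 2) ^ (-(1:ℝ)/2))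
    (t : ℝ → ℝ) (ht : ∀ k : ℝ, t k = K (Real.sqrt (1 - k ^ 2)) / K k)
    (N : ℝ → ℝ)
    (hN : ∀ k : ℝ, N k = (8 * π ^ 2 / L) *
      ∑' m : ℕ, Real.sinh (2 * (m + 1) * π * δ / L) ^ 2
        / Real.sinh ((m + 1) * π * t k) ^ 2) :
    (∀ k : ℝ, 0 < k → k < 1 → 2 * δ / L < t k →
      Summable (fun m : ℕ => Real.sinh (2 * (m + 1) * π * δ / L) ^ 2
        / Real.sinh ((m + 1) * π * t k) ^ 2)) ∧
    (∀ k₁ k₂ : ℝ, 0 < k₁ → k₁ < k₂ → k₂ < 1 →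
      2 * δ / L < t k₁ → 2 * δ / L < t k₂ → N k₁ < N k₂) := by
  refine ⟨fun k _ _ h => summ_aux L δ (t k) hL hδ h, ?_⟩
  intro k₁ k₂ h0 h12 h1 ht1 ht2
  have hp : 0 < 2 * δ / L := by positivity
  have htlt : t k₂ < t k₁ := by
    have a2 : 0 < 1 - k₂ ^ 2 := by nlinarith
    have hlt : √(1 - k₂ ^ 2) < √(1 - k₁ ^ 2) := Real.sqrt_lt_sqrt a2.le (by nlinarith)
    have hl1 : √(1 - k₁ ^ 2) < 1 := by
      rw [Real.sqrt_lt' one_pos]; nlinarith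
    rw [ht, ht]
    have A := K_lt _ _ (Real.sqrt_nonneg _) hlt hl1
    have B := K_lt _ _ h0.le h12 h1
    have C := K_pos _ h0.le (h12.trans h1)
    have D := K_pos _ (Real.sqrt_nonneg _) (hlt.trans hl1)
    rw [← hK, ← hK] at A B
    rw [← hK] at C D
    exact div_lt_div₀ A B.le (D.trans A).le C
  have hterm : ∀ m : ℕ, Real.sinh (2 * (m + 1) * π * δ / L) ^ 2
        / Real.sinh ((m + 1) * π * t k₁) ^ 2 < Real.sinh (2 * (m + 1) * π * δ / L) ^ 2
        / Real.sinh ((m + 1) * π * t k₂) ^ 2 := by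
    intro m
    have t2 : 0 < t k₂ := hp.trans ht2
    have hsx : 0 < Real.sinh (2 * (m + 1) * π * δ / L) := Real.sinh_pos_iff.mpr (by positivity)
    have hsy : 0 < Real.sinh ((m + 1) * π * t k₂) := Real.sinh_pos_iff.mpr (by positivity)
    have hlt : Real.sinh ((m + 1) * π * t k₂) < Real.sinh ((m + 1) * π * t k₁) :=
      Real.sinh_lt_sinh.mpr (mul_lt_mul_of_pos_left htlt (by positivity))
    exact div_lt_div_of_pos_left (by positivity) (by positivity)
      (pow_lt_pow_left₀ hlt hsy.le two_ne_zero)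
  rw [hN, hN]
  refine mul_lt_mul_of_pos_left ?_ (by positivity)
  exact Summable.tsum_lt_tsum (i := 0) (fun m => (hterm m).le) (hterm 0)
    (summ_aux L δ _ hL hδ ht1) (summ_aux L δ _ hL hδ ht2)
end

section
/- Let E be a real inner product space and T : E → E a linear map that is symmetric: ⟨T x, y⟩ = ⟨x, T y⟩ for all x, y ∈ E. Let 𝟙, φ, u, ψ ∈ E and c, β ∈ ℝ, and set Λ = ⟨𝟙, 𝟙⟩. Assume Λ > 0, ⟨φ, 𝟙⟩ = 0, T 𝟙 = c·𝟙 − 2·φ, T u = 𝟙, T ψ = −φ − (β/Λ)·𝟙, and ⟨ψ, 𝟙⟩ = 0. Then ⟨u, 𝟙⟩·(c·Λ + 2β) = Λ². In particular, if c·Λ + 2β > 0 then ⟨u, 𝟙⟩ = Λ²/(cΛ + 2β) > 0. -/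
open RealInnerProductSpace

/-- Abstract form of the identity `⟨ℒ⁻¹1, 1⟩ = L²/(cL + 2(d/dc)‖φ_c‖²)` for the
linearized ILW operator. -/
theorem inner_inv_one_formula
    {E : Type*} [NormedAddCommGroup E] [InnerProductSpace ℝ E]
    (T : E →ₗ[ℝ] E) (hsymm : ∀ x y : E, ⟪T x, y⟫ = ⟪x, T y⟫)
    (o φ u ψ : E) (c β : ℝ) (Λ : ℝ) (hΛdef : Λ = ⟪o, o⟫) (hΛ : 0 < Λ)
    (hφo : ⟪φ, o⟫ = 0)
    (hTo : T o = c • o - (2:ℝ) • φ)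
    (hTu : T u = o)
    (hTψ : T ψ = -φ - (β / Λ) • o)
    (hψo : ⟪ψ, o⟫ = 0) :
    ⟪u, o⟫ * (c * Λ + 2 * β) = Λ ^ 2 ∧
    (0 < c * Λ + 2 * β → ⟪u, o⟫ = Λ ^ 2 / (c * Λ + 2 * β) ∧ 0 < ⟪u, o⟫) := by
  have h1 := hsymm u ψ
  have h2 := hsymm u o
  rw [hTu, hTψ, inner_sub_right, inner_neg_right, real_inner_smul_right, real_inner_comm, hψo] at h1
  rw [hTu, hTo, inner_sub_right, real_inner_smul_right, real_inner_smul_right, ← hΛdef] at h2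
  have hb : β / Λ * Λ = β := div_mul_cancel₀ β hΛ.ne'
  have key : ⟪u, o⟫ * (c * Λ + 2 * β) = Λ ^ 2 := by
    linear_combination (-Λ) * h2 + 2 * Λ * h1 - 2 * ⟪u, o⟫ * hb
  refine ⟨key, fun h => ?_⟩
  have he : ⟪u, o⟫ = Λ ^ 2 / (c * Λ + 2 * β) := by
    rw [eq_div_iff h.ne']
    exact key
  refine ⟨he, ?_⟩
  rw [he]
  positivity
end

section
/- Let E be a real inner product space and T : E → E a symmetric linear map (⟨T x, y⟩ = ⟨x, T y⟩ for all x, y). Let 𝟙, φ, u, ψ, v, w ∈ E and c, β, γ ∈ ℝ, and set Λ = ⟨𝟙, 𝟙⟩. Assume Λ > 0, ⟨φ, 𝟙⟩ = 0, T 𝟙 = c·𝟙 − 2·φ, T u = 𝟙, T ψ = −φ − (β/Λ)·𝟙, ⟨ψ, 𝟙⟩ = 0, T v = φ, T w = 0, ⟨w, φ⟩ = 0, and c·u − 2·v − 𝟙 = γ·w. Then ⟨v, φ⟩·⟨u, 𝟙⟩ − ⟨u, φ⟩² = −(β/2)·⟨u, 𝟙⟩. In particular, if β > 0 and ⟨u,𝟙⟩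 > 0 this quantity is strictly negative. -/
open RealInnerProductSpace

/-- Abstract form of the determinant formula
`det(D) = -(1/2)(1/⟨ℒ⁻¹1,1⟩)(d/dc)∫φ_c²` for the `2×2` matrix built from
`⟨ℒ⁻¹φ_c,φ_c⟩, ⟨ℒ⁻¹φ_c,1⟩, ⟨ℒ⁻¹1,1⟩`. -/
theorem det_D_formula
    {E : Type*} [NormedAddCommGroup E] [InnerProductSpace ℝ E]
    (T : E →ₗ[ℝ] E) (hsymm : ∀ x y : E, ⟪T x, y⟫ = ⟪x, T y⟫)
    (o φ u ψ v w : E) (c β γ : ℝ) (Λ : ℝ) (hΛdef : Λ = ⟪o, o⟫) (hΛ : 0 < Λ)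
    (hφo : ⟪φ, o⟫ = 0)
    (hTo : T o = c • o - (2:ℝ) • φ)
    (hTu : T u = o)
    (hTψ : T ψ = -φ - (β / Λ) • o)
    (hψo : ⟪ψ, o⟫ = 0)
    (hTv : T v = φ)
    (hTw : T w = 0)
    (hwφ : ⟪w, φ⟫ = 0)
    (hker : c • u - (2:ℝ) • v - o = γ • w) :
    ⟪v, φ⟫ * ⟪u, o⟫ - ⟪u, φ⟫ ^ 2 = -(β / 2) * ⟪u, o⟫ ∧
    (0 < β → 0 < ⟪u, o⟫ → ⟪v, φ⟫ * ⟪u, o⟫ - ⟪u, φ⟫ ^ 2 < 0) := by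
  have h1 : -⟪u, φ⟫ - (β / Λ) * ⟪u, o⟫ = 0 := by
    have h := hsymm u ψ
    rw [hTu, hTψ, real_inner_comm, hψo, inner_sub_right, inner_neg_right,
      real_inner_smul_right] at h
    linarith
  have h2 : c * ⟪u, φ⟫ - 2 * ⟪v, φ⟫ = 0 := by
    have h := congrArg (fun x => ⟪x, φ⟫) hker
    have ho : ⟪o, φ⟫ = 0 := by rw [real_inner_comm]; exact hφo
    simp only [inner_sub_left, real_inner_smul_left, hwφ, ho] at h
    linarith
  have h3 : Λ = c * ⟪u, o⟫ - 2 * ⟪u, φ⟫ := by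
    have h := hsymm u o
    rw [hTu, hTo, inner_sub_right, real_inner_smul_right, real_inner_smul_right] at h
    linarith
  have h4 : ⟪u, φ⟫ * Λ = -β * ⟪u, o⟫ := by
    have h : ⟪u, φ⟫ = -((β / Λ) * ⟪u, o⟫) := by linarith
    rw [h]
    field_simp
  have key : ⟪v, φ⟫ * ⟪u, o⟫ - ⟪u, φ⟫ ^ 2 = -(β / 2) * ⟪u, o⟫ := by
    linear_combination (-⟪u, o⟫ / 2) * h2 + (1 / 2) * h4 - (⟪u, φ⟫ / 2) * h3
  refine ⟨key, fun hβ hu => ?_⟩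
  rw [key]
  nlinarith [mul_pos hβ hu]
end

section
/- Let q be a real number with 0 < q < 1 and let w ∈ ℂ satisfy |Im w| < (−log q)/2. Define A(w) = Σ_{n∈ℤ} (−1)ⁿ q^{n²} e^{2inw} (the Jacobi theta function θ₄(w,q)), A'(w) = Σ_{n∈ℤ} (−1)ⁿ q^{n²} (2in) e^{2inw} (its term-wise derivative series, which converges absolutely), and B(w) = Σ_{n=1}^∞ (qⁿ/(1 − q^{2n})) sin(2nw) (which converges absolutely on the strip |Im w| < (−log q)/2). Then A'(w) = 4·A(w)·B(w). -/
open Complex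

lemma th_aux_nat (q : ℝ) (hq0 : 0 < q) (hq1 : q < 1) (r : ℝ) (hr : 0 < r) :
    Summable (fun n : ℕ => q ^ (n ^ 2) * r ^ n) := by
  apply summable_of_ratio_test_tendsto_lt_one (l := 0) zero_lt_one
  · exact Filter.Eventually.of_forall fun n => by positivity
  · have h : (fun n : ℕ => ‖q ^ ((n+1) ^ 2) * r ^ (n+1)‖ / ‖q ^ (n ^ 2) * r ^ n‖)
        = fun n : ℕ => (q ^ 2) ^ n * (q * r) := by
      funext n
      rw [Real.norm_of_nonneg (by positivity), Real.norm_of_nonneg (by positivity),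
        div_eq_iff (by positivity)]
      ring
    rw [h]
    have := (tendsto_pow_atTop_nhds_zero_of_lt_one (r := q ^ 2) (by positivity)
      (by nlinarith)).mul_const (q * r)
    simpa using this

lemma th_aux_int (q : ℝ) (hq0 : 0 < q) (hq1 : q < 1) (z : ℂ) (hz : z ≠ 0) :
    Summable (fun n : ℤ => ‖(-1 : ℂ) ^ n * (q : ℂ) ^ (n ^ 2) * z ^ n‖) := by
  have hr : 0 < ‖z‖ := norm_pos_iff.2 hz
  have e : ∀ n : ℤ, ‖(-1 : ℂ) ^ n * (q : ℂ) ^ (n ^ 2) * z ^ n‖ = q ^ (n ^ 2) * ‖z‖ ^ n := by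
    intro n
    simp [abs_of_pos hq0]
  simp_rw [e]
  apply Summable.of_nat_of_neg
  · refine (th_aux_nat q hq0 hq1 ‖z‖ hr).congr fun n => ?_
    norm_cast
  · refine (th_aux_nat q hq0 hq1 ‖z‖⁻¹ (by positivity)).congr fun n => ?_
    rw [neg_sq, zpow_neg, inv_pow]
    norm_cast

/-- the coefficients -/
noncomputable def thc (q : ℝ) (n : ℤ) : ℂ := (q : ℂ) ^ n / (1 - (q : ℂ) ^ (2 * n))

lemma thc_zero (q : ℝ) : thc q 0 = 0 := by simp [thc]

lemma th_ne (q : ℝ) (hq0 : 0 < q) (hq1 : q < 1) (n : ℤ) (hn : n ≠ 0) :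
    1 - (q : ℂ) ^ (2 * n) ≠ 0 := by
  intro h
  have h1 : (q : ℝ) ^ (2 * n) = 1 := by
    have : (q : ℂ) ^ (2 * n) = 1 := (sub_eq_zero.1 h).symm
    exact_mod_cast this
  rw [zpow_eq_one_iff_right₀ hq0.le hq1.ne] at h1
  omega

lemma thc_neg (q : ℝ) (hq0 : 0 < q) (hq1 : q < 1) (n : ℤ) : thc q (-n) = - thc q n := by
  rcases eq_or_ne n 0 with rfl | hn
  · simp [thc_zero]
  have hq : (q : ℂ) ≠ 0 := by exact_mod_cast hq0.ne'
  have h1 := th_ne q hq0 hq1 n hn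
  have h2 := th_ne q hq0 hq1 (-n) (by omega)
  unfold thc
  rw [← neg_div, div_eq_div_iff h2 h1, mul_sub, mul_sub, ← zpow_add₀ hq, neg_mul, neg_mul,
    ← zpow_add₀ hq]
  rw [show -n + 2 * n = n by ring, show n + 2 * -n = -n by ring]
  ring

lemma thc_bound (q : ℝ) (hq0 : 0 < q) (hq1 : q < 1) (n : ℕ) :
    ‖thc q n‖ ≤ q ^ n / (1 - q ^ 2) := by
  have h2 : 0 < 1 - q ^ 2 := by nlinarith
  rcases Nat.eq_zero_or_pos n with rfl | hn
  · simp only [Nat.cast_zero, thc_zero, norm_zero]; positivity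
  have h3 : q ^ (2 * n) ≤ q ^ 2 := pow_le_pow_of_le_one hq0.le hq1.le (by omega)
  have : thc q n = ((q ^ n / (1 - q ^ (2 * n)) : ℝ) : ℂ) := by
    unfold thc; push_cast; norm_cast
  rw [this, Complex.norm_real, Real.norm_of_nonneg (div_nonneg (by positivity) (by linarith))]
  gcongr

lemma thc_bound' (q : ℝ) (hq0 : 0 < q) (hq1 : q < 1) (n : ℤ) :
    ‖thc q n‖ ≤ 1 / (1 - q ^ 2) := by
  have h2 : 0 < 1 - q ^ 2 := by nlinarith
  have key : ∀ k : ℕ, ‖thc q k‖ ≤ 1 / (1 - q ^ 2) := fun k =>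
    (thc_bound q hq0 hq1 k).trans (by gcongr; exact pow_le_one₀ hq0.le hq1.le)
  obtain ⟨k, rfl | rfl⟩ := n.eq_nat_or_neg
  · exact key k
  · rw [thc_neg q hq0 hq1, norm_neg]; exact key k

lemma thc_summable (q : ℝ) (hq0 : 0 < q) (hq1 : q < 1) (z : ℂ) (hz1 : q < ‖z‖)
    (hz2 : q * ‖z‖ < 1) : Summable (fun n : ℤ => ‖thc q n * z ^ n‖) := by
  have h2 : 0 < 1 - q ^ 2 := by nlinarith
  have hr : 0 < ‖z‖ := hq0.trans hz1
  have key : ∀ r : ℝ, 0 < r → q * r < 1 → Summable (fun n : ℕ => ‖thc q n‖ * r ^ n) := by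
    intro r hr h
    refine Summable.of_nonneg_of_le (fun n => by positivity) (fun n => ?_)
      ((summable_geometric_of_lt_one (r := q * r) (by positivity) h).mul_left (1 / (1 - q ^ 2)))
    calc ‖thc q n‖ * r ^ n ≤ q ^ n / (1 - q ^ 2) * r ^ n := by
          gcongr; exact thc_bound q hq0 hq1 n
      _ = _ := by rw [mul_pow]; ring
  apply Summable.of_nat_of_neg
  · refine (key ‖z‖ hr hz2).congr fun n => ?_
    simp
  · refine (key ‖z‖⁻¹ (by positivity) ?_).congr fun n => ?_
    · rw [← div_eq_mul_inv, div_lt_one hr]; exact hz1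
    · rw [thc_neg q hq0 hq1]; simp

noncomputable def thT (q : ℝ) (m n : ℤ) : ℂ :=
  (-1 : ℂ) ^ n * (q : ℂ) ^ (n ^ 2) * ((q : ℂ) ^ (-2 * m)) ^ n * thc q n

lemma thT_summable (q : ℝ) (hq0 : 0 < q) (hq1 : q < 1) (m : ℤ) :
    Summable (thT q m) := by
  have hq : (q : ℂ) ≠ 0 := by exact_mod_cast hq0.ne'
  have h := th_aux_int q hq0 hq1 ((q : ℂ) ^ (-2 * m)) (zpow_ne_zero _ hq)
  refine Summable.of_norm_bounded (h.mul_right (1 / (1 - q ^ 2))) fun n => ?_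
  unfold thT
  rw [norm_mul]
  gcongr
  exact thc_bound' q hq0 hq1 n

lemma th_theta_zero (q : ℝ) (hq0 : 0 < q) (m : ℤ) :
    ∑' n : ℤ, (-1 : ℂ) ^ n * (q : ℂ) ^ (n ^ 2) * ((q : ℂ) ^ (-(2 * m + 1))) ^ n = 0 := by
  have hq : (q : ℂ) ≠ 0 := by exact_mod_cast hq0.ne'
  have h := (Equiv.subLeft (2 * m + 1)).tsum_eq
    (fun n : ℤ => (-1 : ℂ) ^ n * (q : ℂ) ^ (n ^ 2) * ((q : ℂ) ^ (-(2 * m + 1))) ^ n)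
  have h' : ∀ n : ℤ, (-1 : ℂ) ^ (2 * m + 1 - n) * (q : ℂ) ^ ((2 * m + 1 - n) ^ 2) *
      ((q : ℂ) ^ (-(2 * m + 1))) ^ (2 * m + 1 - n)
      = - ((-1 : ℂ) ^ n * (q : ℂ) ^ (n ^ 2) * ((q : ℂ) ^ (-(2 * m + 1))) ^ n) := by
    intro n
    rw [← zpow_mul, ← zpow_mul, mul_assoc, mul_assoc, ← zpow_add₀ hq, ← zpow_add₀ hq,
      zpow_sub₀ (by norm_num), zpow_add₀ (by norm_num), zpow_mul]
    rw [show (2 * m + 1 - n) ^ 2 + -(2 * m + 1) * (2 * m + 1 - n) = n ^ 2 + -(2 * m + 1) * n by ring]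
    have : ((-1 : ℂ) ^ n)⁻¹ = (-1) ^ n := by rw [← inv_zpow]; norm_num
    rw [div_eq_mul_inv, this]
    simp
  simp only [Equiv.subLeft_apply, h', tsum_neg] at h
  exact self_eq_neg.1 h.symm

lemma thT_step (q : ℝ) (hq0 : 0 < q) (hq1 : q < 1) (m : ℤ) :
    ∑' n, thT q m n - ∑' n, thT q (m + 1) n = 1 := by
  have hq : (q : ℂ) ≠ 0 := by exact_mod_cast hq0.ne'
  rw [← (thT_summable q hq0 hq1 m).tsum_sub (thT_summable q hq0 hq1 (m + 1))]
  have e : ∀ n : ℤ, thT q m n - thT q (m + 1) n = (if n = 0 then 1 else 0) -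
      (-1 : ℂ) ^ n * (q : ℂ) ^ (n ^ 2) * ((q : ℂ) ^ (-(2 * m + 1))) ^ n := by
    intro n
    rcases eq_or_ne n 0 with rfl | hn
    · simp [thT, thc_zero]
    · have h1 := th_ne q hq0 hq1 n hn
      have hn2 : (q : ℂ) ^ n ≠ 0 := zpow_ne_zero _ hq
      have e1 : ((q : ℂ) ^ (-2 * (m + 1))) ^ n = ((q : ℂ) ^ (-2 * m)) ^ n * ((q : ℂ) ^ n)⁻¹ ^ 2 := by
        rw [← zpow_neg, ← zpow_natCast, ← zpow_mul, ← zpow_mul, ← zpow_mul, ← zpow_add₀ hq]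
        congr 1; push_cast; ring
      have e2 : ((q : ℂ) ^ (-(2 * m + 1))) ^ n = ((q : ℂ) ^ (-2 * m)) ^ n * ((q : ℂ) ^ n)⁻¹ := by
        rw [← zpow_neg, ← zpow_mul, ← zpow_mul, ← zpow_add₀ hq]
        congr 1; ring
      have e3 : (q : ℂ) ^ (2 * n) = ((q : ℂ) ^ n) ^ 2 := by
        rw [← zpow_natCast, ← zpow_mul]; congr 1; push_cast; ring
      simp only [thT, thc, e1, e2, if_neg hn]
      rw [e3] at h1 ⊢
      field_simp
      ring
  simp_rw [e]
  have s2 := (th_aux_int q hq0 hq1 ((q : ℂ) ^ (-(2 * m + 1))) (zpow_ne_zero _ hq)).of_norm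
  rw [Summable.tsum_sub (summable_of_ne_finset_zero (s := {0}) (by simp +contextual)) s2,
    th_theta_zero q hq0 m, tsum_ite_eq]
  simp

lemma thT_zero (q : ℝ) (hq0 : 0 < q) (hq1 : q < 1) : ∑' n, thT q 0 n = 0 := by
  have h := (Equiv.neg ℤ).tsum_eq (thT q 0)
  have h' : ∀ n, thT q 0 (-n) = - thT q 0 n := by
    intro n
    have : ((-1 : ℂ) ^ n)⁻¹ = (-1) ^ n := by rw [← inv_zpow]; norm_num
    simp [thT, thc_neg q hq0 hq1, this]
  simp only [Equiv.neg_apply, h', tsum_neg] at h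
  exact self_eq_neg.1 h.symm

lemma thT_val (q : ℝ) (hq0 : 0 < q) (hq1 : q < 1) (m : ℤ) : ∑' n, thT q m n = -m := by
  induction m with
  | zero => simpa using thT_zero q hq0 hq1
  | succ i ih =>
    have := thT_step q hq0 hq1 i
    rw [ih] at this
    push_cast at this ⊢
    linear_combination -this
  | pred i ih =>
    have := thT_step q hq0 hq1 (-i - 1)
    rw [sub_add_cancel, ih] at this
    push_cast at this ⊢
    linear_combination this

lemma th_prod (q : ℝ) (hq0 : 0 < q) (hq1 : q < 1) (z : ℂ) (hz1 : q < ‖z‖)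
    (hz2 : q * ‖z‖ < 1) :
    (∑' n : ℤ, (-1 : ℂ) ^ n * (q : ℂ) ^ (n ^ 2) * z ^ n) * (∑' n : ℤ, thc q n * z ^ n)
      = ∑' m : ℤ, -(m : ℂ) * ((-1 : ℂ) ^ m * (q : ℂ) ^ (m ^ 2) * z ^ m) := by
  have hq : (q : ℂ) ≠ 0 := by exact_mod_cast hq0.ne'
  have hz : z ≠ 0 := norm_pos_iff.1 (hq0.trans hz1)
  have sA := th_aux_int q hq0 hq1 z hz
  have sC := thc_summable q hq0 hq1 z hz1 hz2
  rw [tsum_mul_tsum_of_summable_norm sA sC]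
  have sP := summable_mul_of_summable_norm sA sC
  let e : ℤ × ℤ ≃ ℤ × ℤ :=
    { toFun := fun p => (p.1 - p.2, p.2)
      invFun := fun p => (p.1 + p.2, p.2)
      left_inv := fun p => by simp
      right_inv := fun p => by simp }
  rw [← e.tsum_eq]
  have sP' := e.summable_iff.2 sP
  rw [Summable.tsum_prod (by exact sP')]
  congr 1
  funext m
  rw [← thT_val q hq0 hq1 m, ← tsum_mul_right]
  congr 1
  funext n
  have i1 : ((-1 : ℂ) ^ n)⁻¹ = (-1) ^ n := by rw [← inv_zpow]; norm_num
  have e1 : (-1 : ℂ) ^ (m - n) = (-1) ^ m * (-1) ^ n := by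
    rw [zpow_sub₀ (by norm_num), div_eq_mul_inv, i1]
  have e2 : (q : ℂ) ^ ((m - n) ^ 2) = q ^ (m ^ 2) * q ^ (n ^ 2) * ((q : ℂ) ^ (-2 * m)) ^ n := by
    rw [← zpow_mul, ← zpow_add₀ hq, ← zpow_add₀ hq]; congr 1; ring
  have e3 : z ^ m = z ^ (m - n) * z ^ n := by rw [← zpow_add₀ hz]; simp
  simp only [e, Equiv.coe_fn_mk, thT]
  rw [e1, e2, e3]
  ring

lemma th_C_term (q : ℝ) (hq0 : 0 < q) (hq1 : q < 1) (w z : ℂ) (hzw : z = cexp (2 * I * w))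
    (n : ℕ) : thc q ((n + 1 : ℕ) : ℤ) * z ^ ((n + 1 : ℕ) : ℤ) +
      thc q (-(n + 1 : ℤ)) * z ^ (-(n + 1 : ℤ)) =
      2 * I * (((q : ℂ) ^ (n + 1) / (1 - (q : ℂ) ^ (2 * (n + 1))))
            * Complex.sin (2 * (n + 1) * w)) := by
  rw [thc_neg q hq0 hq1]
  have a1 : z ^ ((n + 1 : ℕ) : ℤ) = cexp (2 * (n + 1) * w * I) := by
    rw [hzw, ← Complex.exp_int_mul]; congr 1; push_cast; ring
  have a2 : z ^ (-(n + 1 : ℤ)) = cexp (-(2 * (n + 1) * w) * I) := by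
    rw [hzw, ← Complex.exp_int_mul]; congr 1; push_cast; ring
  have a3 : thc q (n + 1 : ℤ) = (q : ℂ) ^ (n + 1) / (1 - (q : ℂ) ^ (2 * (n + 1))) := by
    unfold thc
    have b1 : (q : ℂ) ^ (n + 1 : ℤ) = (q : ℂ) ^ (n + 1) := zpow_natCast (q : ℂ) (n + 1)
    have b2 : (q : ℂ) ^ (2 * (n + 1 : ℤ)) = (q : ℂ) ^ (2 * (n + 1)) :=
      zpow_natCast (q : ℂ) (2 * (n + 1))
    rw [b1, b2]
  rw [a1, a2]
  push_cast
  rw [a3, Complex.sin]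
  generalize (q : ℂ) ^ (n + 1) / (1 - (q : ℂ) ^ (2 * (n + 1))) = c
  generalize cexp (-(2 * (n + 1) * w) * I) = x
  generalize cexp (2 * (n + 1) * w * I) = y
  linear_combination (-c * (x - y)) * I_sq

lemma th_C (q : ℝ) (hq0 : 0 < q) (hq1 : q < 1) (w z : ℂ) (hzw : z = cexp (2 * I * w))
    (hz1 : q < ‖z‖) (hz2 : q * ‖z‖ < 1) :
    ∑' n : ℤ, thc q n * z ^ n = 2 * I *
      ∑' n : ℕ, ((q : ℂ) ^ (n + 1) / (1 - (q : ℂ) ^ (2 * (n + 1))))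
            * Complex.sin (2 * (n + 1) * w) := by
  have s := (thc_summable q hq0 hq1 z hz1 hz2).of_norm
  have s1 : Summable (fun n : ℕ => thc q n * z ^ (n : ℤ)) :=
    s.comp_injective (i := fun n : ℕ => (n : ℤ)) Nat.cast_injective
  have s2 : Summable (fun n : ℕ => thc q (-(n + 1 : ℤ)) * z ^ (-(n + 1 : ℤ))) :=
    s.comp_injective (i := fun n : ℕ => -(n + 1 : ℤ)) (fun a b h => by simpa using h)
  have s3 : Summable (fun n : ℕ => thc q ((n + 1 : ℕ) : ℤ) * z ^ ((n + 1 : ℕ) : ℤ)) :=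
    (summable_nat_add_iff 1).2 s1
  have h0 : ∑' n : ℕ, thc q n * z ^ (n : ℤ) =
      ∑' n : ℕ, thc q ((n + 1 : ℕ) : ℤ) * z ^ ((n + 1 : ℕ) : ℤ) := by
    rw [s1.tsum_eq_zero_add, Nat.cast_zero, thc_zero, zero_mul, zero_add]
  have h1 := tsum_of_nat_of_neg_add_one (f := fun n : ℤ => thc q n * z ^ n) s1 s2
  rw [h1, h0, ← s3.tsum_add s2, ← tsum_mul_left]
  exact tsum_congr fun n => th_C_term q hq0 hq1 w z hzw n

/-- Logarithmic derivative of the Jacobi theta function `θ₄`: in the strip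
`|Im w| < (-log q)/2`, with `A(w) = Σ_{n∈ℤ} (-1)ⁿ q^{n²} e^{2inw}`,
its term-wise derivative `A'(w) = Σ_{n∈ℤ} (-1)ⁿ q^{n²} (2in) e^{2inw}` and
`B(w) = Σ_{n≥1} (qⁿ/(1-q^{2n})) sin(2nw)`, one has `A'(w) = 4 A(w) B(w)`. -/
theorem theta4_log_deriv (q : ℝ) (hq0 : 0 < q) (hq1 : q < 1)
    (w : ℂ) (hw : |w.im| < (-Real.log q) / 2) :
    (∑' n : ℤ, (-1 : ℂ) ^ n * (q : ℂ) ^ (n ^ 2) * (2 * Complex.I * n)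
        * Complex.exp (2 * Complex.I * n * w)) =
      4 * (∑' n : ℤ, (-1 : ℂ) ^ n * (q : ℂ) ^ (n ^ 2)
            * Complex.exp (2 * Complex.I * n * w))
        * (∑' n : ℕ, ((q : ℂ) ^ (n + 1) / (1 - (q : ℂ) ^ (2 * (n + 1))))
            * Complex.sin (2 * (n + 1) * w)) := by
  have hn : ‖cexp (2 * I * w)‖ = Real.exp (-2 * w.im) := by
    rw [Complex.norm_exp]; congr 1; simp
  obtain ⟨h1, h2⟩ := abs_lt.1 hw
  have hz1 : q < ‖cexp (2 * I * w)‖ := by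
    rw [hn, ← Real.log_lt_iff_lt_exp hq0]; linarith
  have hz2 : q * ‖cexp (2 * I * w)‖ < 1 := by
    rw [hn]
    nth_rewrite 1 [← Real.exp_log hq0]
    rw [← Real.exp_add, Real.exp_lt_one_iff]; linarith
  have hP := th_prod q hq0 hq1 _ hz1 hz2
  rw [th_C q hq0 hq1 w _ rfl hz1 hz2] at hP
  have ez : ∀ n : ℤ, cexp (2 * I * n * w) = cexp (2 * I * w) ^ n := by
    intro n; rw [← Complex.exp_int_mul]; congr 1; ring
  simp_rw [ez]
  have hL : ∑' n : ℤ, (-1 : ℂ) ^ n * (q : ℂ) ^ (n ^ 2) * (2 * I * n) * cexp (2 * I * w) ^ n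
      = -2 * I * ∑' m : ℤ, -(m : ℂ) * ((-1 : ℂ) ^ m * (q : ℂ) ^ (m ^ 2) * cexp (2 * I * w) ^ m) := by
    rw [← tsum_mul_left]
    congr 1; funext n; ring
  rw [hL, ← hP]
  linear_combination (-4 * (∑' n : ℤ, (-1 : ℂ) ^ n * (q : ℂ) ^ (n ^ 2) * cexp (2 * I * w) ^ n)
        * (∑' n : ℕ, ((q : ℂ) ^ (n + 1) / (1 - (q : ℂ) ^ (2 * (n + 1))))
            * Complex.sin (2 * (n + 1) * w))) * I_sq
end
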